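/- arXiv:math/0605154 — 2 statements merged into one kernel-verified Lean document; each statement's English description precedes it below -/
import Mathlib

section
/- Let G be a finite simple bipartite graph with bipartition classes U and V satisfying |U| = |V| + 1, with edge weights in a commutative ring, and let a_1, b_1, a_2, b_2 be distinct vertices with a_1, b_1, a_2 ∈ U and b_2 ∈ V, such that G is noncrossing with respect to the cyclic sequence (a_1, b_1, a_2, b_2). Then M(G−{a_1})·M(G−{a_2,b_1,b_2}) + M(G−{a_2})·M(G−{a_1,b_1,b_2}) = M(G−{b_1})·M(G−{a_1,a_2,b_2}). -/
/-- A perfect matching of the induced subgraph of `G` on the vertex set `s`,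
represented as a set `m` of edges of `G`: every edge of `m` is an edge of `G`
with both endpoints in `s`, and every vertex of `s` lies in exactly one edge of `m`. -/
def IsPMOn {α : Type*} (G : SimpleGraph α) (s : Finset α) (m : Finset (Sym2 α)) : Prop :=
  (∀ e ∈ m, e ∈ G.edgeSet ∧ ∀ v ∈ e, v ∈ s) ∧ ∀ v ∈ s, ∃! e, e ∈ m ∧ v ∈ e

/-- The number of perfect matchings of the induced subgraph of `G` on `s`. -/
noncomputable def pmCount {α : Type*} (G : SimpleGraph α) (s : Finset α) : ℕ :=
  Nat.card {m : Finset (Sym2 α) // IsPMOn G s m}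

open Classical in
/-- The sum, over all perfect matchings of the induced subgraph of `G` on `s`,
of the product of the weights of the edges of the matching. -/
noncomputable def pmSum {α R : Type*} [Fintype α] [DecidableEq α] [CommRing R]
    (G : SimpleGraph α) (w : Sym2 α → R) (s : Finset α) : R :=
  ∑ m ∈ Finset.univ.filter (fun m : Finset (Sym2 α) => IsPMOn G s m), ∏ e ∈ m, w e

/-- There are two vertex-disjoint paths in `G`, one joining `x₁` to `y₁` and one joining
`x₂` to `y₂`, whose internal vertices avoid `S`. -/
def DisjointPaths {α : Type*} (G : SimpleGraph α) (S : Set α) (x₁ y₁ x₂ y₂ : α) : Prop :=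
  ∃ (p : G.Walk x₁ y₁) (q : G.Walk x₂ y₂), p.IsPath ∧ q.IsPath ∧
    (∀ u ∈ p.support, u ∉ q.support) ∧
    (∀ u ∈ p.support, u ≠ x₁ → u ≠ y₁ → u ∉ S) ∧
    (∀ u ∈ q.support, u ≠ x₂ → u ≠ y₂ → u ∉ S)

/-- `G` is noncrossing with respect to the cyclic sequence given by the list `L`:
there are no indices `i < j < k < l` such that `G` contains two vertex-disjoint paths,
one joining `L[i]` to `L[k]` and one joining `L[j]` to `L[l]`, whose internal vertices
avoid the vertices of `L`. -/
def NoncrossingList {α : Type*} (G : SimpleGraph α) (L : List α) : Prop :=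
  ∀ i j k l : Fin L.length, i < j → j < k → k < l →
    ¬ DisjointPaths G {x | x ∈ L} (L.get i) (L.get k) (L.get j) (L.get l)

/-- `U, W` form a bipartition of the vertices of `G`. -/
def IsBipartition {α : Type*} [Fintype α] [DecidableEq α]
    (G : SimpleGraph α) (U W : Finset α) : Prop :=
  Disjoint U W ∧ U ∪ W = Finset.univ ∧
    ∀ ⦃x y⦄, G.Adj x y → ((x ∈ U ∧ y ∈ W) ∨ (x ∈ W ∧ y ∈ U))

/-- `P` is an `MH`-alternating path, where `MH` is the unique perfect matching of the
induced subgraph of `G` on the vertex set `sH`: `P` is a (nontrivial) path, among any two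
consecutive edges of `P` exactly one lies in `MH`, and for each endpoint the incident edge
of `P` lies in `MH` iff the endpoint belongs to `sH`. -/
def IsAltPath {α : Type*} (G : SimpleGraph α) (sH : Finset α) (MH : Finset (Sym2 α))
    {x y : α} (P : G.Walk x y) : Prop :=
  P.IsPath ∧ P.edges ≠ [] ∧
  P.edges.Chain' (fun e f => e ∈ MH ↔ f ∉ MH) ∧
  (∀ e ∈ P.edges.head?, (e ∈ MH ↔ x ∈ sH)) ∧
  (∀ e ∈ P.edges.getLast?, (e ∈ MH ↔ y ∈ sH))

/-- A family of pairwise vertex-disjoint `MH`-alternating paths in `G` whose set of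
path-endpoints is exactly `A`, each vertex of `A` being an endpoint of exactly one
path of the family. -/
def IsAltPathNest {α : Type*} (G : SimpleGraph α) (sH : Finset α) (MH : Finset (Sym2 α))
    (A : Finset α) (F : Finset (Σ x : α, Σ y : α, G.Walk x y)) : Prop :=
  (∀ p ∈ F, IsAltPath G sH MH p.2.2) ∧
  (∀ p ∈ F, ∀ q ∈ F, p ≠ q → ∀ u ∈ p.2.2.support, u ∉ q.2.2.support) ∧
  (∀ p ∈ F, p.1 ∈ A ∧ p.2.1 ∈ A) ∧
  (∀ v ∈ A, ∃! p, p ∈ F ∧ (v = p.1 ∨ v = p.2.1))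

/-- A 1-factor on `{1, …, n}`: a partition of `Fin n` into pairs, each pair recorded
as an ordered pair `(i, j)` with `i < j`. -/
def IsOneFactor (n : ℕ) (F : Finset (Fin n × Fin n)) : Prop :=
  (∀ p ∈ F, p.1 < p.2) ∧ ∀ v : Fin n, ∃! p, p ∈ F ∧ (v = p.1 ∨ v = p.2)

/-- The crossing number of a 1-factor: the number of pairs of pairs
`(i,j), (k,l)` in `F` with `i < k < j < l`. -/
def crossingNumber (n : ℕ) (F : Finset (Fin n × Fin n)) : ℕ :=
  ((F ×ˢ F).filter (fun q => q.1.1 < q.2.1 ∧ q.2.1 < q.1.2 ∧ q.1.2 < q.2.2)).card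

/-!
Superpose a perfect matching on `s` with one on `t`. The components are paths and cycles, and each
vertex of `s ∆ t` is an endpoint of a path whose other endpoint is again in `s ∆ t`. Exchanging the
two matchings along the path from `b` to `x` preserves the weight and moves `b` and `x` from one
vertex set to the other. If `s ∆ t = {a, b, c, d}`, the noncrossing condition excludes the link
`b`–`d`, since `a` and `c` would then be linked by a disjoint path. Hence `M(s) M(t)` is the sum of
a `b`–`a` part and a `b`–`c` part, and so is each product obtained by toggling `{a, c}`, `{b, a}` or
`{b, c}` in both sets. Switching identifies these eight parts in pairs and yields a relation between
four products, valid in any graph. In the bipartite case one of the four contains `M(G − b₂)`, which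
vanishes because the colour classes of `G − b₂` have different sizes.
-/

open Finset
open scoped symmDiff

section Splice

variable {β : Type*} [DecidableEq β]

/-- The set that agrees with `t` on `C` and with `s` off `C`. It is applied both to vertex sets
and to matchings, where it exchanges the parts of two matchings inside a region `C`. -/
def splice (C s t : Finset β) : Finset β :=
  s \ C ∪ t ∩ C

@[simp]
lemma mem_splice {C s t : Finset β} {x : β} :
    x ∈ splice C s t ↔ x ∈ s ∧ x ∉ C ∨ x ∈ t ∧ x ∈ C := by
  simp [splice]

lemma splice_splice (C s t : Finset β) : splice C (splice C s t) (splice C t s) = s := by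
  grind [mem_splice]

lemma splice_union_splice (C s t : Finset β) : splice C s t ∪ splice C t s = s ∪ t := by
  grind [mem_splice]

lemma splice_eq_symmDiff (C s t : Finset β) : splice C s t = s ∆ ((s ∆ t) ∩ C) := by
  grind [mem_splice, mem_symmDiff]

lemma prod_splice_mul_prod_splice {R : Type*} [CommMonoid R] (f : β → R) (C s t : Finset β) :
    (∏ x ∈ splice C s t, f x) * ∏ x ∈ splice C t s, f x = (∏ x ∈ s, f x) * ∏ x ∈ t, f x := by
  have prod_splice (s t : Finset β) :
      ∏ x ∈ splice C s t, f x = (∏ x ∈ s \ C, f x) * ∏ x ∈ t ∩ C, f x :=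
    prod_union (disjoint_sdiff_self_left.mono_right inter_subset_right)
  rw [prod_splice, prod_splice, ← prod_inter_mul_prod_sdiff s C f,
    ← prod_inter_mul_prod_sdiff t C f]
  ac_rfl

lemma even_card_symmDiff {s t : Finset β} (hs : Even #s) (ht : Even #t) : Even #(s ∆ t) := by
  have hcard : #(s ∆ t) = #(s \ t) + #(t \ s) := card_union_of_disjoint disjoint_sdiff_sdiff
  have hs' := card_sdiff_add_card_inter s t
  have ht' := card_sdiff_add_card_inter t s
  rw [inter_comm] at ht'
  grind

end Splice

section Leaves

variable {α : Type*} [Fintype α] {H : SimpleGraph α} [DecidableRel H.Adj]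

lemma card_degree_le_one_le_two_of_connected (hH : H.Connected) (hdeg : ∀ v, H.degree v ≤ 2) :
    #{v | H.degree v ≤ 1} ≤ 2 := by
  have edges_ge : Fintype.card α ≤ #H.edgeFinset + 1 := by
    rw [SimpleGraph.edgeFinset_card, ← Nat.card_eq_fintype_card, ← Nat.card_eq_fintype_card]
    exact hH.card_vert_le_card_edgeSet_add_one
  have sum_le : ∑ v, (H.degree v + if H.degree v ≤ 1 then 1 else 0) ≤ ∑ _v : α, 2 :=
    sum_le_sum fun v _ ↦ by have := hdeg v; split_ifs <;> omega
  rw [sum_add_distrib, H.sum_degrees_eq_twice_card_edges, ← card_filter, sum_const, card_univ,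
    smul_eq_mul] at sum_le
  omega

lemma card_le_two_of_reachable_of_degree_le_one (hdeg : ∀ v, H.degree v ≤ 2) {A : Finset α}
    {b : α} (hA : ∀ v ∈ A, H.degree v ≤ 1) (hreach : ∀ v ∈ A, H.Reachable b v) : #A ≤ 2 := by
  classical
  obtain ⟨c, hc⟩ : ∃ c, c = H.connectedComponentMk b := ⟨_, rfl⟩
  have degree_eq (v : c.supp) : (H.induce c.supp).degree v = H.degree v :=
    SimpleGraph.degree_induce_of_neighborSet_subset fun u hu ↦ c.mem_supp_of_adj_mem_supp v.2 hu
  have hAc (v) (hv : v ∈ A) : v ∈ c.supp :=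
    hc ▸ SimpleGraph.ConnectedComponent.sound (hreach v hv).symm
  calc #A ≤ #{v : c.supp | (H.induce c.supp).degree v ≤ 1} :=
        card_le_card_of_surjOn Subtype.val fun v hv ↦
          ⟨⟨v, hAc v hv⟩, by simpa only [coe_filter, mem_univ, true_and, Set.mem_ofPred_eq,
            degree_eq] using hA v hv, rfl⟩
    _ ≤ 2 := card_degree_le_one_le_two_of_connected c.connected_toSimpleGraph
        fun v ↦ (degree_eq v).trans_le (hdeg v)

end Leaves

section Matchings

variable {α : Type*} {G : SimpleGraph α} {s t C : Finset α} {M N : Finset (Sym2 α)}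

lemma IsPMOn.adj (hM : IsPMOn G s M) {u v : α} (h : s(u, v) ∈ M) : G.Adj u v :=
  (hM.1 _ h).1

lemma IsPMOn.mem_left (hM : IsPMOn G s M) {u v : α} (h : s(u, v) ∈ M) : u ∈ s :=
  (hM.1 _ h).2 u (Sym2.mem_mk_left u v)

lemma IsPMOn.mem_right (hM : IsPMOn G s M) {u v : α} (h : s(u, v) ∈ M) : v ∈ s :=
  (hM.1 _ h).2 v (Sym2.mem_mk_right u v)

lemma IsPMOn.exists_mk_mem (hM : IsPMOn G s M) {v : α} (hv : v ∈ s) : ∃ u, s(v, u) ∈ M := by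
  obtain ⟨e, ⟨he, u, rfl⟩, -⟩ := hM.2 v hv
  exact ⟨u, he⟩

lemma IsPMOn.eq_of_mk_mem (hM : IsPMOn G s M) {v u u' : α} (h : s(v, u) ∈ M)
    (h' : s(v, u') ∈ M) : u = u' :=
  Sym2.congr_right.1 <|
    (hM.2 v (hM.mem_left h)).unique ⟨h, Sym2.mem_mk_left v u⟩ ⟨h', Sym2.mem_mk_left v u'⟩

lemma IsPMOn.sum_eq_zero (hM : IsPMOn G s M) {A : Type*} [AddCommGroup A] {f : α → A}
    (hf : ∀ ⦃u v⦄, G.Adj u v → f u + f v = 0) : ∑ v ∈ s, f v = 0 := by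
  choose g hg using fun v (hv : v ∈ s) ↦ hM.exists_mk_mem hv
  refine sum_involution g (fun v hv ↦ hf (hM.adj (hg v hv)))
    (fun v hv _ ↦ (hM.adj (hg v hv)).ne') (fun v hv ↦ hM.mem_right (hg v hv)) fun v hv ↦ ?_
  exact hM.eq_of_mk_mem (hg _ _) (Sym2.eq_swap ▸ hg v hv)

-- Summing the constant function `1` with values in `ZMod 2` counts vertices modulo `2`.
lemma IsPMOn.even_card (hM : IsPMOn G s M) : Even #s := by
  rw [← ZMod.natCast_eq_zero_iff_even, ← nsmul_one, ← sum_const]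
  exact hM.sum_eq_zero fun _ _ _ ↦ by decide

/-- No edge of `M` joins `C` to its complement. -/
def EdgeClosed (C : Finset α) (M : Finset (Sym2 α)) : Prop :=
  ∀ e ∈ M, ∀ v ∈ e, v ∈ C → e ∈ C.sym2

variable [DecidableEq α]

lemma isPMOn_splice (hM : IsPMOn G s M) (hN : IsPMOn G t N) (hCM : EdgeClosed C M)
    (hCN : EdgeClosed C N) : IsPMOn G (splice C s t) (splice C.sym2 M N) := by
  have mem_sym2 {e : Sym2 α} {v : α} (he : e ∈ C.sym2) (hv : v ∈ e) : v ∈ C :=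
    mem_sym2_iff.1 he v hv
  refine ⟨fun e he ↦ ?_, fun v hv ↦ ?_⟩
  · rcases mem_splice.1 he with ⟨heM, heC⟩ | ⟨heN, heC⟩
    · exact ⟨(hM.1 e heM).1, fun v hv ↦ mem_splice.2 <| .inl
        ⟨(hM.1 e heM).2 v hv, fun hvC ↦ heC (hCM e heM v hv hvC)⟩⟩
    · exact ⟨(hN.1 e heN).1, fun v hv ↦ mem_splice.2 <| .inr
        ⟨(hN.1 e heN).2 v hv, mem_sym2 heC hv⟩⟩
  · rcases mem_splice.1 hv with ⟨hvs, hvC⟩ | ⟨hvt, hvC⟩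
    · obtain ⟨e, ⟨heM, hve⟩, he⟩ := hM.2 v hvs
      refine ⟨e, ⟨mem_splice.2 <| .inl ⟨heM, fun heC ↦ hvC (mem_sym2 heC hve)⟩, hve⟩, ?_⟩
      rintro f ⟨hf, hvf⟩
      rcases mem_splice.1 hf with ⟨hfM, -⟩ | ⟨-, hfC⟩
      · exact he f ⟨hfM, hvf⟩
      · exact absurd (mem_sym2 hfC hvf) hvC
    · obtain ⟨e, ⟨heN, hve⟩, he⟩ := hN.2 v hvt
      refine ⟨e, ⟨mem_splice.2 <| .inr ⟨heN, hCN e heN v hve hvC⟩, hve⟩, ?_⟩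
      rintro f ⟨hf, hvf⟩
      rcases mem_splice.1 hf with ⟨hfM, hfC⟩ | ⟨hfN, -⟩
      · exact absurd (hCM f hfM v hvf hvC) hfC
      · exact he f ⟨hfN, hvf⟩

lemma IsPMOn.inter (hM : IsPMOn G s M) (hC : EdgeClosed C M) :
    IsPMOn G (s ∩ C) (M ∩ C.sym2) := by
  have hempty : IsPMOn G ∅ ∅ := ⟨by simp, by simp⟩
  simpa [splice] using isPMOn_splice hempty hM (C := C) (by simp [EdgeClosed]) hC

lemma IsPMOn.even_card_symmDiff_inter (hM : IsPMOn G s M) (hN : IsPMOn G t N)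
    (hCM : EdgeClosed C M) (hCN : EdgeClosed C N) : Even #(s ∆ t ∩ C) := by
  rw [← inf_eq_inter, inf_symmDiff_distrib_right]
  exact even_card_symmDiff (hM.inter hCM).even_card (hN.inter hCN).even_card

end Matchings

section Superposition

variable {α : Type*} [DecidableEq α] {G : SimpleGraph α} {s t : Finset α}
  {M N : Finset (Sym2 α)} {b x : α}

/-- The graph formed by the edges of `M` and `N` together. For two matchings its components are
paths and cycles, a common edge of `M` and `N` being a component of its own. -/
def superposition (M N : Finset (Sym2 α)) : SimpleGraph α :=
  SimpleGraph.fromEdgeSet (M ∪ N : Finset (Sym2 α))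

lemma superposition_splice (C M N : Finset (Sym2 α)) :
    superposition (splice C M N) (splice C N M) = superposition M N := by
  rw [superposition, splice_union_splice, superposition]

lemma mk_mem_of_superposition_adj {u v : α} (h : (superposition M N).Adj u v) :
    s(u, v) ∈ M ∨ s(u, v) ∈ N := by
  simpa using ((SimpleGraph.fromEdgeSet_adj _).1 h).1

lemma IsPMOn.superposition_le (hM : IsPMOn G s M) (hN : IsPMOn G t N) :
    superposition M N ≤ G := fun _ _ h ↦
  (mk_mem_of_superposition_adj h).elim hM.adj hN.adj

variable [Fintype α]

lemma IsPMOn.card_mk_mem_le (hM : IsPMOn G s M) (v : α) :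
    #{u | s(v, u) ∈ M} ≤ if v ∈ s then 1 else 0 := by
  split_ifs with hv
  · exact card_le_one.2 fun u hu u' hu' ↦
      hM.eq_of_mk_mem (mem_filter_univ u |>.1 hu) (mem_filter_univ u' |>.1 hu')
  · exact (card_filter_eq_zero_iff.2 fun u _ hu ↦ hv (hM.mem_left hu)).le

lemma IsPMOn.degree_superposition_le (hM : IsPMOn G s M) (hN : IsPMOn G t N) (v : α)
    [DecidableRel (superposition M N).Adj] :
    (superposition M N).degree v ≤ (if v ∈ s then 1 else 0) + if v ∈ t then 1 else 0 := by
  calc (superposition M N).degree v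
      ≤ #(univ.filter (s(v, ·) ∈ M) ∪ univ.filter (s(v, ·) ∈ N)) := card_le_card fun u hu ↦ by
        simpa using mk_mem_of_superposition_adj ((SimpleGraph.mem_neighborFinset _ _ _).1 hu)
    _ ≤ #{u | s(v, u) ∈ M} + #{u | s(v, u) ∈ N} := card_union_le _ _
    _ ≤ _ := add_le_add (hM.card_mk_mem_le v) (hN.card_mk_mem_le v)

open Classical in
/-- The vertex set of the component of `b` in the superposition of `M` and `N`. -/
noncomputable def superpositionComponent (M N : Finset (Sym2 α)) (b : α) : Finset α :=
  {x | (superposition M N).Reachable b x}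

@[simp]
lemma mem_superpositionComponent :
    x ∈ superpositionComponent M N b ↔ (superposition M N).Reachable b x := by
  simp [superpositionComponent]

lemma superpositionComponent_splice (C M N : Finset (Sym2 α)) (b : α) :
    superpositionComponent (splice C M N) (splice C N M) b = superpositionComponent M N b := by
  ext x
  simp only [mem_superpositionComponent, superposition_splice]

lemma edgeClosed_superpositionComponent {E : Finset (Sym2 α)} (hE : E ⊆ M ∪ N) (b : α) :
    EdgeClosed (superpositionComponent M N b) E := by
  rintro _ he v ⟨u, rfl⟩ hv
  refine mk_mem_sym2_iff.2 ⟨hv, ?_⟩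
  rw [mem_superpositionComponent] at hv ⊢
  rcases eq_or_ne v u with rfl | hne
  · exact hv
  · exact hv.trans
      ((SimpleGraph.fromEdgeSet_adj _).2 ⟨mem_coe.2 (hE he), hne⟩).reachable

lemma IsPMOn.card_symmDiff_component_le_two (hM : IsPMOn G s M) (hN : IsPMOn G t N) (b : α) :
    #(s ∆ t ∩ superpositionComponent M N b) ≤ 2 := by
  classical
  refine card_le_two_of_reachable_of_degree_le_one (H := superposition M N) (b := b)
    (fun v ↦ ?_) (fun v hv ↦ ?_) fun v hv ↦ mem_superpositionComponent.1 (mem_inter.1 hv).2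
  · have := hM.degree_superposition_le hN v
    split_ifs at this <;> omega
  · have := hM.degree_superposition_le hN v
    rcases mem_symmDiff.1 (mem_inter.1 hv).1 with ⟨hs, ht⟩ | ⟨ht, hs⟩ <;>
      simpa [hs, ht] using this

lemma IsPMOn.exists_symmDiff_component_eq_pair (hM : IsPMOn G s M) (hN : IsPMOn G t N)
    (hb : b ∈ s ∆ t) :
    ∃ x, x ≠ b ∧ s ∆ t ∩ superpositionComponent M N b = {b, x} := by
  have hbC : b ∈ s ∆ t ∩ superpositionComponent M N b := by simp [hb]
  have hcard : #(s ∆ t ∩ superpositionComponent M N b) = 2 := by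
    have hpos := card_pos.2 ⟨b, hbC⟩
    have hle := hM.card_symmDiff_component_le_two hN b
    have heven := hM.even_card_symmDiff_inter hN
      (edgeClosed_superpositionComponent subset_union_left b)
      (edgeClosed_superpositionComponent subset_union_right b)
    grind
  obtain ⟨y, z, hyz, heq⟩ := card_eq_two.1 hcard
  rw [heq, mem_insert, mem_singleton] at hbC
  rcases hbC with rfl | rfl
  · exact ⟨z, hyz.symm, heq⟩
  · exact ⟨y, hyz, heq.trans (pair_comm y b)⟩

lemma IsPMOn.symmDiff_component_eq_pair (hM : IsPMOn G s M) (hN : IsPMOn G t N)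
    (hb : b ∈ s ∆ t) (hx : x ∈ s ∆ t) (hxb : x ≠ b) (h : (superposition M N).Reachable b x) :
    s ∆ t ∩ superpositionComponent M N b = {b, x} := by
  obtain ⟨y, -, hy⟩ := hM.exists_symmDiff_component_eq_pair hN hb
  have hxy : x ∈ ({b, y} : Finset α) := hy ▸ by simp [hx, h]
  obtain rfl : x = y := by simpa [hxb] using hxy
  exact hy

lemma isPMOn_splice_component (hM : IsPMOn G s M) (hN : IsPMOn G t N) (b : α) :
    IsPMOn G (s ∆ (s ∆ t ∩ superpositionComponent M N b))
        (splice (superpositionComponent M N b).sym2 M N) ∧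
      IsPMOn G (t ∆ (s ∆ t ∩ superpositionComponent M N b))
        (splice (superpositionComponent M N b).sym2 N M) := by
  have hCM := edgeClosed_superpositionComponent (subset_union_left : M ⊆ M ∪ N) b
  have hCN := edgeClosed_superpositionComponent (subset_union_right : N ⊆ M ∪ N) b
  rw [← splice_eq_symmDiff, symmDiff_comm s t, ← splice_eq_symmDiff]
  exact ⟨isPMOn_splice hM hN hCM hCN, isPMOn_splice hN hM hCN hCM⟩

end Superposition

section Noncrossing

variable {α : Type*} {G H : SimpleGraph α} {a b c d : α}

lemma NoncrossingList.reachable_of_reachable (hnc : NoncrossingList G [a, b, c, d]) (hH : H ≤ G)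
    (hac : H.Reachable a c) (hbd : H.Reachable b d) : H.Reachable a b := by
  classical
  by_contra hab
  obtain ⟨p, hp⟩ := hac.exists_isPath
  obtain ⟨q, hq⟩ := hbd.exists_isPath
  have hpa {u} (hu : u ∈ (p.mapLe hH).support) : H.Reachable a u :=
    ⟨p.takeUntil u (p.support_mapLe_eq_support hH ▸ hu)⟩
  have hqb {u} (hu : u ∈ (q.mapLe hH).support) : H.Reachable b u :=
    ⟨q.takeUntil u (q.support_mapLe_eq_support hH ▸ hu)⟩
  refine hnc 0 1 2 3 Fin.zero_lt_one (by simp [Fin.lt_def]) (by simp [Fin.lt_def])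
    ⟨p.mapLe hH, q.mapLe hH, hp.mapLe hH, hq.mapLe hH, fun u hup huq ↦ ?_,
      fun u hup hua huc hu ↦ ?_, fun u huq hub hud hu ↦ ?_⟩
  · exact hab ((hpa hup).trans (hqb huq).symm)
  · obtain rfl | rfl : u = b ∨ u = d := by
      simpa [show u ≠ a from hua, show u ≠ c from huc] using hu
    exacts [hab (hpa hup), hab ((hpa hup).trans hbd.symm)]
  · obtain rfl | rfl : u = a ∨ u = c := by
      simpa [show u ≠ b from hub, show u ≠ d from hud] using hu
    exacts [hab (hqb huq).symm, hab (hac.trans (hqb huq).symm)]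

lemma IsPMOn.not_reachable_of_noncrossing [Finite α] [DecidableEq α] {s t : Finset α}
    {M N : Finset (Sym2 α)} (hM : IsPMOn G s M) (hN : IsPMOn G t N)
    (hnc : NoncrossingList G [a, b, c, d]) (hdist : [a, b, c, d].Nodup)
    (hst : s ∆ t = {a, b, c, d}) : ¬ (superposition M N).Reachable b d := by
  have := Fintype.ofFinite α
  intro hbd
  have hbC : s ∆ t ∩ superpositionComponent M N b = {b, d} :=
    hM.symmDiff_component_eq_pair hN (by simp [hst]) (by simp [hst]) (by grind) hbd
  have hab : ¬ (superposition M N).Reachable a b := fun hab ↦ by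
    have ha : a ∈ s ∆ t ∩ superpositionComponent M N b := by simp [hst, hab.symm]
    grind
  obtain ⟨y, hya, hy⟩ := hM.exists_symmDiff_component_eq_pair hN (b := a) (by simp [hst])
  have hymem : y ∈ s ∆ t ∩ superpositionComponent M N a := by simp [hy]
  rw [hst, mem_inter, mem_superpositionComponent] at hymem
  obtain ⟨hy, hay⟩ := hymem
  obtain rfl | rfl | rfl : y = b ∨ y = c ∨ y = d := by simpa [hya] using hy
  · exact hab hay
  · exact hab (hnc.reachable_of_reachable (hM.superposition_le hN) hay hbd)
  · exact hab (hay.trans hbd.symm)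

end Noncrossing

section LinkedSum

variable {α : Type*} [Fintype α] [DecidableEq α] (G : SimpleGraph α)

open Classical in
/-- The pairs of perfect matchings on `s` and on `t` whose superposition connects `b` to `x`. -/
noncomputable def linkedPairs (s t : Finset α) (b x : α) :
    Finset (Finset (Sym2 α) × Finset (Sym2 α)) :=
  {p | (IsPMOn G s p.1 ∧ IsPMOn G t p.2) ∧ (superposition p.1 p.2).Reachable b x}

/-- The part of the product of the matching sums on `s` and `t` that comes from those pairs of
perfect matchings whose superposition connects `b` to `x`. -/
noncomputable def linkedSum {R : Type*} [CommSemiring R] (w : Sym2 α → R) (s t : Finset α)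
    (b x : α) : R :=
  ∑ p ∈ linkedPairs G s t b x, (∏ e ∈ p.1, w e) * ∏ e ∈ p.2, w e

/-- Exchange the edges of the two matchings inside the component of `b` in their
superposition. -/
noncomputable def switchAt (b : α) (p : Finset (Sym2 α) × Finset (Sym2 α)) :
    Finset (Sym2 α) × Finset (Sym2 α) :=
  (splice (superpositionComponent p.1 p.2 b).sym2 p.1 p.2,
    splice (superpositionComponent p.1 p.2 b).sym2 p.2 p.1)

lemma switchAt_involutive (b : α) : Function.Involutive (switchAt b) := fun p ↦ by
  simp only [switchAt, superpositionComponent_splice, splice_splice]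

variable {G} {R : Type*} {s t s' t' : Finset α} {b x : α}
  {p : Finset (Sym2 α) × Finset (Sym2 α)}

lemma mem_linkedPairs :
    p ∈ linkedPairs G s t b x ↔
      (IsPMOn G s p.1 ∧ IsPMOn G t p.2) ∧ (superposition p.1 p.2).Reachable b x := by
  simp [linkedPairs]

lemma switchAt_mem_linkedPairs (hs : s ∆ s' = {b, x}) (ht : t ∆ t' = {b, x}) (hb : b ∈ s ∆ t)
    (hx : x ∈ s ∆ t) (hxb : x ≠ b) (hp : p ∈ linkedPairs G s t b x) :
    switchAt b p ∈ linkedPairs G s' t' b x := by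
  obtain ⟨⟨hM, hN⟩, hbx⟩ := mem_linkedPairs.1 hp
  have hsplice := isPMOn_splice_component hM hN b
  rw [hM.symmDiff_component_eq_pair hN hb hx hxb hbx] at hsplice
  nth_rw 1 [← hs] at hsplice
  rw [← ht, symmDiff_symmDiff_cancel_left, symmDiff_symmDiff_cancel_left] at hsplice
  exact mem_linkedPairs.2 ⟨hsplice, by rwa [switchAt, superposition_splice]⟩

lemma linkedSum_eq_linkedSum_of_symmDiff_eq_pair [CommSemiring R] (w : Sym2 α → R)
    (hs : s ∆ s' = {b, x}) (ht : t ∆ t' = {b, x}) (hb : b ∈ s ∆ t) (hx : x ∈ s ∆ t)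
    (hxb : x ≠ b) : linkedSum G w s t b x = linkedSum G w s' t' b x := by
  have hst : s ∆ t = s' ∆ t' := by
    rw [← symmDiff_eq_bot, symmDiff_symmDiff_symmDiff_comm, hs, ht, symmDiff_self]
  exact sum_nbij' (switchAt b) (switchAt b)
    (fun p ↦ switchAt_mem_linkedPairs hs ht hb hx hxb)
    (fun p ↦ switchAt_mem_linkedPairs (symmDiff_comm s s' ▸ hs) (symmDiff_comm t t' ▸ ht)
      (hst ▸ hb) (hst ▸ hx) hxb)
    (fun p _ ↦ switchAt_involutive b p) (fun p _ ↦ switchAt_involutive b p)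
    fun p _ ↦ (prod_splice_mul_prod_splice w _ p.1 p.2).symm

lemma linkedSum_eq_zero [CommSemiring R] (w : Sym2 α → R)
    (h : ∀ M N, IsPMOn G s M → IsPMOn G t N → ¬ (superposition M N).Reachable b x) :
    linkedSum G w s t b x = 0 := by
  have hempty : linkedPairs G s t b x = ∅ := eq_empty_of_forall_notMem fun p hp ↦ by
    obtain ⟨⟨hM, hN⟩, hbx⟩ := mem_linkedPairs.1 hp
    exact h p.1 p.2 hM hN hbx
  rw [linkedSum, hempty, sum_empty]

lemma pairwiseDisjoint_linkedPairs (hb : b ∈ s ∆ t) :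
    (((s ∆ t).erase b : Finset α) : Set α).PairwiseDisjoint (linkedPairs G s t b) := by
  refine fun x hx y hy hxy ↦ disjoint_left.2 fun p hpx hpy ↦ hxy ?_
  obtain ⟨hxb, hx⟩ := mem_erase.1 hx
  obtain ⟨hyb, hy⟩ := mem_erase.1 hy
  obtain ⟨⟨hM, hN⟩, hbx⟩ := mem_linkedPairs.1 hpx
  obtain ⟨-, hby⟩ := mem_linkedPairs.1 hpy
  have hpair : ({b, x} : Finset α) = {b, y} :=
    (hM.symmDiff_component_eq_pair hN hb hx hxb hbx).symm.trans
      (hM.symmDiff_component_eq_pair hN hb hy hyb hby)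
  have hmem : x ∈ ({b, y} : Finset α) := hpair ▸ by simp
  simpa [hxb] using hmem

lemma mem_biUnion_linkedPairs (hb : b ∈ s ∆ t) :
    p ∈ ((s ∆ t).erase b).biUnion (linkedPairs G s t b) ↔ IsPMOn G s p.1 ∧ IsPMOn G t p.2 := by
  refine ⟨fun hp ↦ ?_, fun ⟨hM, hN⟩ ↦ ?_⟩
  · obtain ⟨x, -, hx⟩ := mem_biUnion.1 hp
    exact (mem_linkedPairs.1 hx).1
  · obtain ⟨x, hxb, hpair⟩ := hM.exists_symmDiff_component_eq_pair hN hb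
    have hx : x ∈ s ∆ t ∩ superpositionComponent p.1 p.2 b := by simp [hpair]
    rw [mem_inter, mem_superpositionComponent] at hx
    exact mem_biUnion.2 ⟨x, mem_erase.2 ⟨hxb, hx.1⟩, mem_linkedPairs.2 ⟨⟨hM, hN⟩, hx.2⟩⟩

variable [CommRing R] (w : Sym2 α → R)

lemma pmSum_mul_pmSum_eq_sum_linkedSum (hb : b ∈ s ∆ t) :
    pmSum G w s * pmSum G w t = ∑ x ∈ (s ∆ t).erase b, linkedSum G w s t b x := by
  simp only [linkedSum]
  rw [← sum_biUnion (pairwiseDisjoint_linkedPairs hb), pmSum, pmSum, sum_mul_sum,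
    ← sum_product']
  refine sum_congr (ext fun p ↦ ?_) fun _ _ ↦ rfl
  simp [mem_biUnion_linkedPairs hb]

lemma pmSum_mul_pmSum_of_noncrossing {a b c d : α} (hnc : NoncrossingList G [a, b, c, d])
    (hdist : [a, b, c, d].Nodup) (hst : s ∆ t = {a, b, c, d}) :
    pmSum G w s * pmSum G w t = linkedSum G w s t b a + linkedSum G w s t b c := by
  have hzero : linkedSum G w s t b d = 0 := linkedSum_eq_zero w fun _ _ hM hN ↦
    hM.not_reachable_of_noncrossing hN hnc hdist hst
  have herase : (s ∆ t).erase b = {a, c, d} := by grind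
  rw [pmSum_mul_pmSum_eq_sum_linkedSum w (b := b) (by simp [hst]), herase,
    sum_insert (by grind), sum_pair (by grind), hzero, add_zero]

theorem pmSum_condensation_of_noncrossing {a b c d : α} (hnc : NoncrossingList G [a, b, c, d])
    (hdist : [a, b, c, d].Nodup) (hst : s ∆ t = {a, b, c, d}) :
    pmSum G w s * pmSum G w t + pmSum G w (s ∆ {a, c}) * pmSum G w (t ∆ {a, c}) =
      pmSum G w (s ∆ {b, a}) * pmSum G w (t ∆ {b, a}) +
        pmSum G w (s ∆ {b, c}) * pmSum G w (t ∆ {b, c}) := by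
  have hdiff (P : Finset α) : (s ∆ P) ∆ (t ∆ P) = {a, b, c, d} := by
    rw [symmDiff_symmDiff_symmDiff_comm, symmDiff_self, symmDiff_bot, hst]
  have hac_ba (r : Finset α) : (r ∆ {a, c}) ∆ (r ∆ {b, a}) = {b, c} := by grind [mem_symmDiff]
  have hac_bc (r : Finset α) : (r ∆ {a, c}) ∆ (r ∆ {b, c}) = {b, a} := by grind [mem_symmDiff]
  have hswitch_a : linkedSum G w s t b a = linkedSum G w (s ∆ {b, a}) (t ∆ {b, a}) b a :=
    linkedSum_eq_linkedSum_of_symmDiff_eq_pair w (symmDiff_symmDiff_cancel_left _ _)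
      (symmDiff_symmDiff_cancel_left _ _) (by simp [hst]) (by simp [hst]) (by grind)
  have hswitch_c : linkedSum G w s t b c = linkedSum G w (s ∆ {b, c}) (t ∆ {b, c}) b c :=
    linkedSum_eq_linkedSum_of_symmDiff_eq_pair w (symmDiff_symmDiff_cancel_left _ _)
      (symmDiff_symmDiff_cancel_left _ _) (by simp [hst]) (by simp [hst]) (by grind)
  have hswitch_ac_a : linkedSum G w (s ∆ {a, c}) (t ∆ {a, c}) b a =
      linkedSum G w (s ∆ {b, c}) (t ∆ {b, c}) b a :=
    linkedSum_eq_linkedSum_of_symmDiff_eq_pair w (hac_bc s) (hac_bc t)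
      (by simp [hdiff]) (by simp [hdiff]) (by grind)
  have hswitch_ac_c : linkedSum G w (s ∆ {a, c}) (t ∆ {a, c}) b c =
      linkedSum G w (s ∆ {b, a}) (t ∆ {b, a}) b c :=
    linkedSum_eq_linkedSum_of_symmDiff_eq_pair w (hac_ba s) (hac_ba t)
      (by simp [hdiff]) (by simp [hdiff]) (by grind)
  rw [pmSum_mul_pmSum_of_noncrossing w hnc hdist hst,
    pmSum_mul_pmSum_of_noncrossing w hnc hdist (hdiff {a, c}),
    pmSum_mul_pmSum_of_noncrossing w hnc hdist (hdiff {b, a}),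
    pmSum_mul_pmSum_of_noncrossing w hnc hdist (hdiff {b, c}),
    hswitch_a, hswitch_c, hswitch_ac_a, hswitch_ac_c]
  ring

end LinkedSum

section Bipartite

variable {α : Type*} [Fintype α] [DecidableEq α] {G : SimpleGraph α} {U V s : Finset α}

lemma IsPMOn.card_inter_eq_card_inter {M : Finset (Sym2 α)} (hM : IsPMOn G s M)
    (hbip : IsBipartition G U V) : #(s ∩ U) = #(s ∩ V) := by
  have hdisj := disjoint_left.1 hbip.1
  have hsum := hM.sum_eq_zero (A := ℤ)
    (f := fun v ↦ (if v ∈ U then 1 else 0) - if v ∈ V then 1 else 0)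
    fun u v huv ↦ by have := hbip.2.2 huv; grind
  rw [sum_sub_distrib, sum_boole, sum_boole, sub_eq_zero, Nat.cast_inj] at hsum
  simpa only [filter_mem_eq_inter] using hsum

lemma pmSum_eq_zero_of_card_inter_ne {R : Type*} [CommRing R] (w : Sym2 α → R)
    (hbip : IsBipartition G U V) (hs : #(s ∩ U) ≠ #(s ∩ V)) : pmSum G w s = 0 := by
  classical
  rw [pmSum]
  exact sum_eq_zero fun M hM ↦ absurd ((mem_filter.1 hM).2.card_inter_eq_card_inter hbip) hs

end Bipartite

/-- Bipartite odd condensation (Remark after Corollary 2.7; Theorem 2.4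
of Kuo). -/
theorem bipartite_condensation_odd {α R : Type*} [Fintype α] [DecidableEq α] [CommRing R]
    (G : SimpleGraph α) (w : Sym2 α → R)
    (U V : Finset α) (hbip : IsBipartition G U V)
    (hcard : U.card = V.card + 1)
    (a₁ b₁ a₂ b₂ : α)
    (ha₁ : a₁ ∈ U) (hb₁ : b₁ ∈ U) (ha₂ : a₂ ∈ U) (hb₂ : b₂ ∈ V)
    (hdist : ([a₁, b₁, a₂, b₂] : List α).Nodup)
    (hnc : NoncrossingList G [a₁, b₁, a₂, b₂]) :
    pmSum G w (Finset.univ \ {a₁}) * pmSum G w (Finset.univ \ {a₂, b₁, b₂}) +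
      pmSum G w (Finset.univ \ {a₂}) * pmSum G w (Finset.univ \ {a₁, b₁, b₂}) =
    pmSum G w (Finset.univ \ {b₁}) * pmSum G w (Finset.univ \ {a₁, a₂, b₂}) := by
  have hdiff : (univ \ {a₁}) ∆ (univ \ {a₂, b₁, b₂}) = {a₁, b₁, a₂, b₂} := by
    grind [mem_symmDiff]
  have hzero : pmSum G w (univ \ {b₂}) = 0 := by
    refine pmSum_eq_zero_of_card_inter_ne w hbip (ne_of_gt ?_)
    have hU : (univ \ {b₂}) ∩ U = U := by grind [disjoint_left.1 hbip.1]
    rw [hU, hcard]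
    exact Nat.lt_succ_of_le (card_le_card inter_subset_right)
  have hcond := pmSum_condensation_of_noncrossing w hnc hdist hdiff
  have h₁ : (univ \ {a₁}) ∆ {a₁, a₂} = univ \ {a₂} := by grind [mem_symmDiff]
  have h₂ : (univ \ {a₂, b₁, b₂}) ∆ {a₁, a₂} = univ \ {a₁, b₁, b₂} := by grind [mem_symmDiff]
  have h₃ : (univ \ {a₁}) ∆ {b₁, a₁} = univ \ {b₁} := by grind [mem_symmDiff]
  have h₄ : (univ \ {a₂, b₁, b₂}) ∆ {b₁, a₁} = univ \ {a₁, a₂, b₂} := by grind [mem_symmDiff]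
  have h₅ : (univ \ {a₂, b₁, b₂}) ∆ {b₁, a₂} = univ \ {b₂} := by grind [mem_symmDiff]
  rwa [h₁, h₂, h₃, h₄, h₅, hzero, mul_zero, add_zero] at hcond
end

section
/- Let G be a finite simple graph, let S be a set of vertices of G, and suppose the induced subgraph H = G−S has exactly one perfect matching M_H. For any two distinct vertices a and b of G, let H_{ab} denote the induced subgraph of G on the symmetric difference of V(H) and {a,b}. Then the number of perfect matchings of H_{ab} equals the number of M_H-alternating paths in G from a to b. -/
/-!
Toggling a perfect matching `M` of `H` along an `M`-alternating path from `a` to `b` gives a perfect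
matching of `H ∆ {a, b}`, and a path is determined by its set of edges, so `P ↦ M ∆ P` is injective.
Conversely, let `N` be a perfect matching of `H ∆ {a, b}`. Every vertex other than `a` and `b` is
covered by both or neither of `M` and `N`, so the component of `M ∆ N` containing `a` is a path `P`
from `a` to `b`, which alternates for both matchings. Toggling `N` along `P` gives a perfect
matching of `H`, which is `M` by uniqueness; hence `N = M ∆ P`.
-/

open SimpleGraph
open scoped symmDiff

theorem card_symmDiff_singleton_lt {β : Type*} [DecidableEq β] {s : Finset β} {x : β}
    (hx : x ∈ s) : (s ∆ {x}).card < s.card := by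
  rw [symmDiff_of_ge (Finset.singleton_subset_iff.2 hx), Finset.sdiff_singleton_eq_erase]
  exact Finset.card_erase_lt_of_mem hx

theorem pair_symmDiff_pair {β : Type*} [DecidableEq β] {a b c : β} (hac : a ≠ c) (hcb : c ≠ b)
    (hab : a ≠ b) : ({a, c} : Finset β) ∆ {c, b} = {a, b} := by
  ext v
  simp only [Finset.mem_symmDiff, Finset.mem_insert, Finset.mem_singleton]
  grind

section Matching

variable {α : Type*} {G : SimpleGraph α} {s t : Finset α} {m k : Finset (Sym2 α)} {x y : α}

theorem IsPMOn.mem_of_edge_mem (hm : IsPMOn G s m) (hxy : s(x, y) ∈ m) : x ∈ s :=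
  (hm.1 _ hxy).2 x (Sym2.mem_mk_left x y)

theorem IsPMOn.adj_of_edge_mem (hm : IsPMOn G s m) (hxy : s(x, y) ∈ m) : G.Adj x y :=
  (hm.1 _ hxy).1

theorem IsPMOn.exists_edge_mem (hm : IsPMOn G s m) (hx : x ∈ s) : ∃ y, s(x, y) ∈ m := by
  obtain ⟨e, ⟨he, y, rfl⟩, -⟩ := hm.2 x hx
  exact ⟨y, he⟩

variable [DecidableEq α]

theorem isPMOn_pair (hxy : G.Adj x y) : IsPMOn G {x, y} {s(x, y)} := by
  refine ⟨fun e he => ?_, fun v hv => ⟨s(x, y), ?_, ?_⟩⟩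
  · obtain rfl := Finset.mem_singleton.1 he
    exact ⟨hxy, by simp⟩
  · simpa using hv
  · exact fun e he => Finset.mem_singleton.1 he.1

theorem IsPMOn.union (hm : IsPMOn G s m) (hk : IsPMOn G t k) (hst : Disjoint s t) :
    IsPMOn G (s ∪ t) (m ∪ k) := by
  refine ⟨fun e he => ?_, fun v hv => ?_⟩
  · rcases Finset.mem_union.1 he with he | he
    · exact ⟨(hm.1 e he).1, fun v hv => Finset.mem_union_left t ((hm.1 e he).2 v hv)⟩
    · exact ⟨(hk.1 e he).1, fun v hv => Finset.mem_union_right s ((hk.1 e he).2 v hv)⟩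
  · rcases Finset.mem_union.1 hv with hv | hv
    · obtain ⟨e, ⟨he, hve⟩, he_unique⟩ := hm.2 v hv
      refine ⟨e, ⟨Finset.mem_union_left k he, hve⟩, fun f ⟨hf, hvf⟩ => ?_⟩
      have hfk : f ∉ k := fun hfk => Finset.disjoint_left.1 hst hv ((hk.1 f hfk).2 v hvf)
      exact he_unique f ⟨(Finset.mem_union.1 hf).resolve_right hfk, hvf⟩
    · obtain ⟨e, ⟨he, hve⟩, he_unique⟩ := hk.2 v hv
      refine ⟨e, ⟨Finset.mem_union_right m he, hve⟩, fun f ⟨hf, hvf⟩ => ?_⟩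
      have hfm : f ∉ m := fun hfm => Finset.disjoint_left.1 hst ((hm.1 f hfm).2 v hvf) hv
      exact he_unique f ⟨(Finset.mem_union.1 hf).resolve_left hfm, hvf⟩

theorem IsPMOn.sdiff (hm : IsPMOn G s m) (hk : IsPMOn G t k) (hkm : k ⊆ m) :
    IsPMOn G (s \ t) (m \ k) := by
  refine ⟨fun e he => ?_, fun v hv => ?_⟩
  · obtain ⟨hem, hek⟩ := Finset.mem_sdiff.1 he
    refine ⟨(hm.1 e hem).1, fun v hve => Finset.mem_sdiff.2 ⟨(hm.1 e hem).2 v hve, fun hvt => ?_⟩⟩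
    obtain ⟨f, ⟨hfk, hvf⟩, -⟩ := hk.2 v hvt
    have hef : e = f := (hm.2 v ((hm.1 e hem).2 v hve)).unique ⟨hem, hve⟩ ⟨hkm hfk, hvf⟩
    exact hek (hef ▸ hfk)
  · obtain ⟨hvs, hvt⟩ := Finset.mem_sdiff.1 hv
    obtain ⟨e, ⟨he, hve⟩, he_unique⟩ := hm.2 v hvs
    have hek : e ∉ k := fun hek => hvt ((hk.1 e hek).2 v hve)
    exact ⟨e, ⟨Finset.mem_sdiff.2 ⟨he, hek⟩, hve⟩,
      fun f hf => he_unique f ⟨(Finset.mem_sdiff.1 hf.1).1, hf.2⟩⟩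

theorem IsPMOn.symmDiff_pair (hm : IsPMOn G s m) (hxy : G.Adj x y)
    (hx : s(x, y) ∈ m ↔ x ∈ s) (hy : s(x, y) ∈ m ↔ y ∈ s) :
    IsPMOn G (s ∆ {x, y}) (m ∆ {s(x, y)}) := by
  by_cases he : s(x, y) ∈ m
  · have hsub : {x, y} ⊆ s := by simp [Finset.insert_subset_iff, hx.1 he, hy.1 he]
    have hsub' : {s(x, y)} ⊆ m := Finset.singleton_subset_iff.2 he
    rw [symmDiff_of_ge hsub, symmDiff_of_ge hsub']
    exact hm.sdiff (isPMOn_pair hxy) hsub'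
  · have hdisj : Disjoint s {x, y} := by simp [← hx, ← hy, he]
    have hdisj' : Disjoint m {s(x, y)} := Finset.disjoint_singleton_right.2 he
    rw [hdisj.symmDiff_eq_sup, hdisj'.symmDiff_eq_sup]
    exact hm.union (isPMOn_pair hxy) hdisj

theorem IsPMOn.symmDiff_pair_of_edge_mem (hm : IsPMOn G s m) (hxy : s(x, y) ∈ m) :
    IsPMOn G (s ∆ {x, y}) (m ∆ {s(x, y)}) :=
  hm.symmDiff_pair (hm.adj_of_edge_mem hxy) (iff_of_true hxy (hm.mem_of_edge_mem hxy))
    (iff_of_true hxy (hm.mem_of_edge_mem (Sym2.eq_swap ▸ hxy)))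

end Matching

section Path

variable {α : Type*} {G : SimpleGraph α} {a b c : α}

theorem edge_notMem_edges_of_notMem_support {p : G.Walk b c} (ha : a ∉ p.support) (x : α) :
    s(a, x) ∉ p.edges :=
  fun hax => ha (p.fst_mem_support_of_mem_edges hax)

theorem isPath_eq_of_mem_edges_iff {p q : G.Walk a b} (hp : p.IsPath) (hq : q.IsPath)
    (hpq : ∀ e, e ∈ p.edges ↔ e ∈ q.edges) : p = q := by
  induction p with
  | nil => exact (Walk.eq_nil_iff_nil.2 (Walk.isPath_iff_nil.1 hq)).symm
  | @cons a c b h p ih =>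
    cases q with
    | nil => simpa using hpq s(a, c)
    | @cons _ d _ h' q =>
      have hdc : d = c := by
        simpa using hq.eq_snd_of_mem_edges ((hpq s(a, c)).1 (by simp)) |>.symm
      subst hdc
      rw [Walk.cons_isPath_iff] at hp hq
      have hap := edge_notMem_edges_of_notMem_support hp.2 d
      have haq := edge_notMem_edges_of_notMem_support hq.2 d
      rw [ih hp.1 hq.1 fun e => ?_]
      have he := hpq e
      simp only [Walk.edges_cons, List.mem_cons] at he
      grind

variable [DecidableEq α]

theorem edges_toFinset_cons_eq_symmDiff {h : G.Adj a c} {p : G.Walk c b} (ha : a ∉ p.support) :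
    (Walk.cons h p).edges.toFinset = {s(a, c)} ∆ p.edges.toFinset := by
  have hac : Disjoint {s(a, c)} p.edges.toFinset := by
    simpa using edge_notMem_edges_of_notMem_support ha c
  rw [hac.symmDiff_eq_sup, Walk.edges_cons, List.toFinset_cons, Finset.insert_eq,
    Finset.sup_eq_union]

end Path

section AltPath

variable {α : Type*} {G : SimpleGraph α} {H K : Finset α} {M N : Finset (Sym2 α)} {a b c : α}

theorem isAltPath_iff_isChain {p : G.Walk a b} :
    IsAltPath G H M p ↔ p.IsPath ∧ p.edges ≠ [] ∧
      p.edges.IsChain (fun e f => e ∈ M ↔ f ∉ M) ∧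
      (∀ e ∈ p.edges.head?, (e ∈ M ↔ a ∈ H)) ∧ (∀ e ∈ p.edges.getLast?, (e ∈ M ↔ b ∈ H)) :=
  Iff.rfl

theorem isAltPath_cons_nil_iff (h : G.Adj a b) :
    IsAltPath G H M (.cons h .nil) ↔ (s(a, b) ∈ M ↔ a ∈ H) ∧ (s(a, b) ∈ M ↔ b ∈ H) := by
  simp [isAltPath_iff_isChain, h.ne]

-- Only the membership of the endpoints in the vertex set matters, so `K` may be any set that
-- prescribes the right kind of first edge for `p`.
theorem isAltPath_cons_iff (h : G.Adj a c) {p : G.Walk c b} (ha : a ∉ p.support) (hp : ¬p.Nil)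
    (hc : c ∈ K ↔ s(a, c) ∉ M) (hb : b ∈ K ↔ b ∈ H) :
    IsAltPath G H M (.cons h p) ↔ (s(a, c) ∈ M ↔ a ∈ H) ∧ IsAltPath G K M p := by
  cases p with
  | nil => exact absurd Walk.Nil.nil hp
  | cons h' p =>
    simp only [isAltPath_iff_isChain, Walk.cons_isPath_iff h, Walk.edges_cons,
      List.isChain_cons_cons, List.head?_cons, List.getLast?_cons_cons, Option.mem_some_iff,
      forall_eq', ne_eq, reduceCtorEq, not_false_eq_true, hc, hb, ha]
    tauto

theorem IsAltPath.not_nil {p : G.Walk a b} (hp : IsAltPath G H M p) : ¬p.Nil :=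
  fun h => hp.2.1 (Walk.edges_eq_nil.2 h)

theorem isAltPath_congr {p : G.Walk a b} (hMN : ∀ e ∈ p.edges, (e ∈ M ↔ e ∈ N))
    (ha : a ∈ H ↔ a ∈ K) (hb : b ∈ H ↔ b ∈ K) : IsAltPath G H M p ↔ IsAltPath G K N p := by
  have hchain : p.edges.IsChain (fun e f => e ∈ M ↔ f ∉ M) ↔
      p.edges.IsChain (fun e f => e ∈ N ↔ f ∉ N) :=
    List.IsChain.iff_of_mem_imp fun e f he hf => by rw [hMN e he, hMN f hf]
  have hhead : (∀ e ∈ p.edges.head?, (e ∈ M ↔ a ∈ H)) ↔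
      ∀ e ∈ p.edges.head?, (e ∈ N ↔ a ∈ K) :=
    forall₂_congr fun e he => by rw [hMN e (List.mem_of_head? he), ha]
  have hlast : (∀ e ∈ p.edges.getLast?, (e ∈ M ↔ b ∈ H)) ↔
      ∀ e ∈ p.edges.getLast?, (e ∈ N ↔ b ∈ K) :=
    forall₂_congr fun e he => by rw [hMN e (List.mem_of_getLast? he), hb]
  rw [isAltPath_iff_isChain, isAltPath_iff_isChain, hchain, hhead, hlast]

theorem IsAltPath.exists_edge_mem {p : G.Walk a b} (hp : IsAltPath G H M p) (ha : a ∈ H) :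
    ∃ d, s(a, d) ∈ M := by
  cases p with
  | nil => exact absurd Walk.Nil.nil hp.not_nil
  | @cons _ d _ h p => exact ⟨d, (hp.2.2.2.1 _ (by simp)).2 ha⟩

theorem IsAltPath.of_cons_of_edge_notMem {h : G.Adj a c} {p : G.Walk c b}
    (hp : IsAltPath G H M (.cons h p)) (hM : IsPMOn G H M) (hac : s(a, c) ∉ M) (hcb : c ≠ b) :
    a ∉ H ∧ c ∈ H ∧ IsAltPath G H M p := by
  classical
  have ha : a ∉ p.support := ((Walk.cons_isPath_iff h p).1 hp.1).2
  obtain ⟨haH, hp'⟩ := (isAltPath_cons_iff (K := insert c H) h ha (Walk.not_nil_of_ne hcb)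
    (by simp [hac]) (by simp [hcb.symm])).1 hp
  obtain ⟨d, hcd⟩ := hp'.exists_edge_mem (Finset.mem_insert_self c H)
  have hcH : c ∈ H := hM.mem_of_edge_mem hcd
  rw [Finset.insert_eq_of_mem hcH] at hp'
  exact ⟨fun haH' => hac (haH.2 haH'), hcH, hp'⟩

variable [DecidableEq α]

theorem IsAltPath.swap {p : G.Walk a b} (hp : IsAltPath G H M p) (hpMN : ∀ e ∈ p.edges, e ∈ M ∆ N)
    (ha : a ∈ H ∆ K) (hb : b ∈ H ∆ K) : IsAltPath G K N p := by
  simp only [Finset.mem_symmDiff] at ha hb hpMN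
  obtain ⟨hpath, hne, hchain, hhead, hlast⟩ := hp
  refine ⟨hpath, hne, hchain.imp_of_mem_imp fun e f he hf => ?_, fun e he => ?_, fun e he => ?_⟩
  · have := hpMN e he
    have := hpMN f hf
    tauto
  · have := hhead e he
    have := hpMN e (List.mem_of_head? he)
    tauto
  · have := hlast e he
    have := hpMN e (List.mem_of_getLast? he)
    tauto

theorem isAltPath_cons_iff_of_edge_mem (hM : IsPMOn G H M) (h : G.Adj a c) {p : G.Walk c b}
    (ha : a ∉ p.support) (hac : s(a, c) ∈ M) (hcb : c ≠ b) :
    IsAltPath G H M (.cons h p) ↔ IsAltPath G (H ∆ {a, c}) (M ∆ {s(a, c)}) p := by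
  have haH : a ∈ H := hM.mem_of_edge_mem hac
  have hcH : c ∈ H := hM.mem_of_edge_mem (Sym2.eq_swap ▸ hac)
  have hba : b ≠ a := fun hba => ha (hba ▸ p.end_mem_support)
  have hedges : ∀ e ∈ p.edges, (e ∈ M ↔ e ∈ M ∆ {s(a, c)}) := fun e he => by
    have hne : e ≠ s(a, c) := fun h => edge_notMem_edges_of_notMem_support ha c (h ▸ he)
    simp [Finset.mem_symmDiff, hne]
  rw [isAltPath_cons_iff (K := H ∆ {a, c}) h ha (Walk.not_nil_of_ne hcb)
      (by simp [Finset.mem_symmDiff, hcH, hac]) (by simp [Finset.mem_symmDiff, hba, hcb.symm]),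
    and_iff_right (iff_of_true hac haH), isAltPath_congr hedges Iff.rfl Iff.rfl]

theorem IsPMOn.symmDiff_edges {p : G.Walk a b} (hM : IsPMOn G H M) (hp : IsAltPath G H M p) :
    IsPMOn G (H ∆ {a, b}) (M ∆ p.edges.toFinset) := by
  induction p generalizing H M with
  | nil => exact absurd Walk.Nil.nil hp.not_nil
  | @cons a c b h p ih =>
    by_cases hcb : c = b
    · subst hcb
      obtain rfl := Walk.eq_nil_iff_nil.2 (Walk.isPath_iff_nil.1 hp.1.of_cons)
      obtain ⟨ha, hc⟩ := (isAltPath_cons_nil_iff h).1 hp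
      exact hM.symmDiff_pair h ha hc
    have ha_support : a ∉ p.support := ((Walk.cons_isPath_iff h p).1 hp.1).2
    have hab : a ≠ b := fun hab => ha_support (hab ▸ p.end_mem_support)
    rw [edges_toFinset_cons_eq_symmDiff ha_support, ← pair_symmDiff_pair h.ne hcb hab,
      ← symmDiff_assoc, ← symmDiff_assoc]
    by_cases hac : s(a, c) ∈ M
    · -- Delete `s(a, c)` from `M` first, then toggle along `p`.
      exact ih (hM.symmDiff_pair_of_edge_mem hac)
        ((isAltPath_cons_iff_of_edge_mem hM h ha_support hac hcb).1 hp)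
    · -- Toggle along `p` first, which uncovers `c`, then add `s(a, c)`.
      obtain ⟨ha, hc, hp'⟩ := hp.of_cons_of_edge_notMem hM hac hcb
      have hN := ih hM hp'
      have ha' : a ∉ H ∆ {c, b} := by simp [Finset.mem_symmDiff, ha, h.ne, hab]
      have hc' : c ∉ H ∆ {c, b} := by simp [Finset.mem_symmDiff, hc]
      have hac' : s(a, c) ∉ M ∆ p.edges.toFinset := fun he => ha' (hN.mem_of_edge_mem he)
      rw [symmDiff_right_comm H, symmDiff_right_comm M]
      exact hN.symmDiff_pair h (iff_of_false hac' ha') (iff_of_false hac' hc')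

theorem IsPMOn.notMem_support {p : G.Walk a b} (hM : IsPMOn G H M) (hN : IsPMOn G K N)
    (hp : ¬p.Nil) (hpMN : ∀ e ∈ p.edges, e ∈ M ∆ N) (hcH : c ∉ H) (hcK : c ∉ K) :
    c ∉ p.support := by
  rw [Walk.mem_support_iff_exists_mem_edges_of_not_nil hp]
  rintro ⟨e, he, hce⟩
  rcases Finset.mem_symmDiff.1 (hpMN e he) with ⟨heM, -⟩ | ⟨heN, -⟩
  · exact hcH ((hM.1 e heM).2 c hce)
  · exact hcK ((hN.1 e heN).2 c hce)

theorem IsAltPath.cons_of_edge_mem {p : G.Walk c b}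
    (hp : IsAltPath G (H ∆ {a, c}) (M ∆ {s(a, c)}) p)
    (hpMN : ∀ e ∈ p.edges, e ∈ (M ∆ {s(a, c)}) ∆ N) (hM : IsPMOn G H M) (hN : IsPMOn G K N)
    (h : G.Adj a c) (hac : s(a, c) ∈ M) (haK : a ∉ K) (hcb : c ≠ b) :
    IsAltPath G H M (.cons h p) ∧ ∀ e ∈ (Walk.cons h p).edges, e ∈ M ∆ N := by
  have haH : a ∉ H ∆ {a, c} := by simp [Finset.mem_symmDiff, hM.mem_of_edge_mem hac]
  have ha : a ∉ p.support :=
    (hM.symmDiff_pair_of_edge_mem hac).notMem_support hN hp.not_nil hpMN haH haK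
  have hacN : s(a, c) ∉ N := fun hacN => haK (hN.mem_of_edge_mem hacN)
  refine ⟨(isAltPath_cons_iff_of_edge_mem hM h ha hac hcb).2 hp, fun e he => ?_⟩
  rw [Walk.edges_cons, List.mem_cons] at he
  rcases he with rfl | he
  · exact Finset.mem_symmDiff.2 (Or.inl ⟨hac, hacN⟩)
  · have hne : e ≠ s(a, c) := fun h => edge_notMem_edges_of_notMem_support ha c (h ▸ he)
    simpa [Finset.mem_symmDiff, hne] using hpMN e he

-- Follow `M ∆ N` from `a`. Exchanging the two matchings if necessary, `a` is covered by `M` but not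
-- by `N`; deleting its edge `s(a, c)` from `M` leaves the same situation with `c` in place of `a`.
theorem IsPMOn.exists_isAltPath (hM : IsPMOn G H M) (hN : IsPMOn G K N) (hab : a ≠ b)
    (hHK : H ∆ K = {a, b}) :
    ∃ p : G.Walk a b, IsAltPath G H M p ∧ ∀ e ∈ p.edges, e ∈ M ∆ N := by
  induction hn : M.card + N.card using Nat.strong_induction_on generalizing H K M N a with
  | _ n ih =>
  have ha_symmDiff : a ∈ H ∆ K := by simp [hHK]
  wlog ha : a ∈ H generalizing H K M N
  · have haK : a ∈ K := by simpa [Finset.mem_symmDiff, ha] using ha_symmDiff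
    rw [symmDiff_comm] at hHK ha_symmDiff
    obtain ⟨p, hp, hpNM⟩ := this hN hM hHK (add_comm M.card N.card ▸ hn) ha_symmDiff haK
    exact ⟨p, hp.swap hpNM ha_symmDiff (by simp [hHK]), symmDiff_comm N M ▸ hpNM⟩
  have haK : a ∉ K := by simpa [Finset.mem_symmDiff, ha] using ha_symmDiff
  obtain ⟨c, hac⟩ := hM.exists_edge_mem ha
  have h : G.Adj a c := hM.adj_of_edge_mem hac
  by_cases hcb : c = b
  · subst hcb
    have hc : c ∈ H := hM.mem_of_edge_mem (Sym2.eq_swap ▸ hac)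
    have hacN : s(a, c) ∉ N := fun hacN => haK (hN.mem_of_edge_mem hacN)
    exact ⟨.cons h .nil, (isAltPath_cons_nil_iff h).2 ⟨iff_of_true hac ha, iff_of_true hac hc⟩,
      by simp [Finset.mem_symmDiff, hac, hacN]⟩
  have hHK' : (H ∆ {a, c}) ∆ K = {c, b} := by
    rw [symmDiff_right_comm, hHK, symmDiff_comm, Finset.pair_comm a c,
      pair_symmDiff_pair h.ne' hab hcb]
  have hcard : (M ∆ {s(a, c)}).card + N.card < n :=
    hn ▸ Nat.add_lt_add_right (card_symmDiff_singleton_lt hac) N.card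
  obtain ⟨p, hp, hpMN⟩ := ih _ hcard (hM.symmDiff_pair_of_edge_mem hac) hN hcb hHK' rfl
  exact ⟨.cons h p, hp.cons_of_edge_mem hpMN hM hN h hac haK hcb⟩

theorem IsPMOn.exists_isAltPath_symmDiff_edges_eq (hM : IsPMOn G H M)
    (hM_unique : ∀ m, IsPMOn G H m → m = M) (hab : a ≠ b) (hN : IsPMOn G (H ∆ {a, b}) N) :
    ∃ p : G.Walk a b, IsAltPath G H M p ∧ M ∆ p.edges.toFinset = N := by
  have hHK : H ∆ (H ∆ {a, b}) = {a, b} := symmDiff_symmDiff_cancel_left H {a, b}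
  obtain ⟨p, hp, hpMN⟩ := hM.exists_isAltPath hN hab hHK
  have hpN : IsAltPath G (H ∆ {a, b}) N p := hp.swap hpMN (by simp [hHK]) (by simp [hHK])
  have hNp : IsPMOn G H (N ∆ p.edges.toFinset) := by
    simpa only [symmDiff_symmDiff_cancel_right] using hN.symmDiff_edges hpN
  exact ⟨p, hp, by rw [← hM_unique _ hNp, symmDiff_symmDiff_cancel_right]⟩

end AltPath

theorem alt_path_count_eq_pmCount_general {α : Type*} [DecidableEq α]
    (G : SimpleGraph α) (H : Finset α) (MH : Finset (Sym2 α))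
    (hMH : IsPMOn G H MH) (huniq : ∀ m, IsPMOn G H m → m = MH) (a b : α) (hab : a ≠ b) :
    pmCount G (H ∆ {a, b}) = Nat.card {P : G.Walk a b // IsAltPath G H MH P} := by
  let toggle (P : {P : G.Walk a b // IsAltPath G H MH P}) :
      {m : Finset (Sym2 α) // IsPMOn G (H ∆ {a, b}) m} :=
    ⟨MH ∆ P.1.edges.toFinset, hMH.symmDiff_edges P.2⟩
  have toggle_injective : Function.Injective toggle := by
    rintro ⟨p, hp⟩ ⟨q, hq⟩ hpq
    have hedges : p.edges.toFinset = q.edges.toFinset :=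
      symmDiff_right_injective MH (congrArg Subtype.val hpq)
    have hmem : ∀ e, e ∈ p.edges ↔ e ∈ q.edges := by simpa [Finset.ext_iff] using hedges
    exact Subtype.ext (isPath_eq_of_mem_edges_iff hp.1 hq.1 hmem)
  have toggle_surjective : Function.Surjective toggle := by
    rintro ⟨N, hN⟩
    obtain ⟨p, hp, hpN⟩ := hMH.exists_isAltPath_symmDiff_edges_eq huniq hab hN
    exact ⟨⟨p, hp⟩, Subtype.ext hpN⟩
  exact (Nat.card_eq_of_bijective toggle ⟨toggle_injective, toggle_surjective⟩).symm

/-- (Lemma 3.2.) If `H = G − S` has a unique perfect matching `MH`,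
then the number of perfect matchings of the induced subgraph `H_{ab}` of `G` on the
symmetric difference of `V(H)` and `{a, b}` equals the number of `MH`-alternating paths
in `G` from `a` to `b`. -/
theorem alt_path_count_eq_pmCount {α : Type*} [Fintype α] [DecidableEq α]
    (G : SimpleGraph α) (S : Finset α) (MH : Finset (Sym2 α))
    (hMH : IsPMOn G (Finset.univ \ S) MH)
    (huniq : ∀ m, IsPMOn G (Finset.univ \ S) m → m = MH)
    (a b : α) (hab : a ≠ b) :
    pmCount G (symmDiff (Finset.univ \ S) {a, b}) =
      Nat.card {P : G.Walk a b // IsAltPath G (Finset.univ \ S) MH P} :=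
  alt_path_count_eq_pmCount_general G (Finset.univ \ S) MH hMH huniq a b hab
end
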